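/- Fix an integer ℓ ≥ 2 and a parameter ρ > 0. There exist constants N = N(ℓ,ρ) and C = C(ℓ,ρ) such that for every ρ-balanced multislice M_κ on n ≥ N points and ℓ colours the following holds: if f : M_κ → ℝ is a degree-one function which satisfies E[dist(f,{0,1})²] = ε, then there exists a Boolean function g : M_κ → {0,1} depending on at most one coordinate such that E[(f−g)²] ≤ Cε. -/

import Mathlib

open Finset

noncomputable section

/-- The multislice: vectors in `[ℓ]^n` whose colour counts are given by `κ`. -/
def multislice (ℓ n : ℕ) (κ : Fin ℓ → ℕ) : Finset (Fin n → Fin ℓ) :=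
  Finset.univ.filter fun u => ∀ i, (Finset.univ.filter fun j => u j = i).card = κ i

/-- Expectation with respect to the uniform measure on the multislice. -/
def msExp (ℓ n : ℕ) (κ : Fin ℓ → ℕ) (f : (Fin n → Fin ℓ) → ℝ) : ℝ :=
  (∑ u ∈ multislice ℓ n κ, f u) / ((multislice ℓ n κ).card : ℝ)

/-- The indicator variable `x_{ji}`. -/
def xvar (ℓ n : ℕ) (j : Fin n) (i : Fin ℓ) (u : Fin n → Fin ℓ) : ℝ :=
  if u j = i then 1 else 0

/-- A function on the multislice has degree one if it is of the form
`c + ∑_j ∑_i c_{ji} x_{ji}`. -/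
def degreeOne (ℓ n : ℕ) (κ : Fin ℓ → ℕ) (f : (Fin n → Fin ℓ) → ℝ) : Prop :=
  ∃ (c : ℝ) (coef : Fin n → Fin ℓ → ℝ), ∀ u ∈ multislice ℓ n κ,
    f u = c + ∑ j, ∑ i, coef j i * xvar ℓ n j i u

/-- Distance of a real number to the set `{0,1}`. -/
def dist01 (x : ℝ) : ℝ := min |x| |x - 1|

/-- A function is Boolean on the multislice if it takes values in `{0,1}` there. -/
def booleanOn (ℓ n : ℕ) (κ : Fin ℓ → ℕ) (g : (Fin n → Fin ℓ) → ℝ) : Prop :=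
  ∀ u ∈ multislice ℓ n κ, g u = 0 ∨ g u = 1

/-- A dictator: a function depending on at most one coordinate. -/
def dictator (ℓ n : ℕ) (κ : Fin ℓ → ℕ) (g : (Fin n → Fin ℓ) → ℝ) : Prop :=
  ∃ j : Fin n, ∀ u ∈ multislice ℓ n κ, ∀ v ∈ multislice ℓ n κ, u j = v j → g u = g v

/-!
Write `f u = c + ∑ x, v x (u x)`. Composing a random point `u` of the multislice with the
transpositions in a random subset of a pairing of the coordinates does not change its distribution,
and given `u` it turns `f` into an affine function of independent random signs. Two blocks of signs
which both carry weight spread such a function over the vertices of a nondegenerate parallelogram,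
and by pigeonhole three of these vertices cannot all be close to `{0, 1}` unless two of them are
close to each other. Hence, in any pairing split into two halves, one half has total weight `O(ε)`,
where the weight of a pair `(j, k)` is the squared oscillation of `v j - v k`.

Splitting pairings greedily and averaging over the rounds of a round-robin tournament, one finds
coordinates `j₀` and `k` such that the weights of the pairs `(x, k)` with `x ≠ j₀` add up to `O(ε)`.
On the multislice `∑ x, v k (u x)` is constant, so `v k` may be subtracted from all the `v x`, and a
variance bound then shows that `f` is `O(ε)`-close to a function of `u j₀`. Rounding this function
to `{0, 1}` gives the dictator.
-/

open scoped BigOperators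

/-- Rounding to the nearest point of `{0,1}`, with the tie at `1/2` going to `0`. -/
def nearestBit (x : ℝ) : ℝ := if |x| ≤ |x - 1| then 0 else 1

lemma nearestBit_eq_zero_or_one (x : ℝ) : nearestBit x = 0 ∨ nearestBit x = 1 := by
  unfold nearestBit
  split_ifs <;> simp

lemma abs_sub_nearestBit (x : ℝ) : |x - nearestBit x| = dist01 x := by
  unfold nearestBit dist01
  split_ifs with h
  · rw [min_eq_left h, sub_zero]
  · rw [min_eq_right (not_le.mp h).le]

lemma dist01_le_abs_sub_nearestBit (x y : ℝ) : dist01 x ≤ |x - nearestBit y| := by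
  rcases nearestBit_eq_zero_or_one y with h | h <;> simp [h, dist01]

lemma dist01_le_abs_sub_add (x y : ℝ) : dist01 x ≤ |x - y| + dist01 y := by
  rw [← abs_sub_nearestBit y]
  exact (dist01_le_abs_sub_nearestBit x y).trans (abs_sub_le _ _ _)

lemma sq_sub_nearestBit_le (x y : ℝ) :
    (x - nearestBit y) ^ 2 ≤ 8 * (x - y) ^ 2 + 2 * dist01 x ^ 2 := by
  have habs : |x - nearestBit y| ≤ 2 * |x - y| + dist01 x := by
    have hround := abs_sub_le x y (nearestBit y)
    have hdist := dist01_le_abs_sub_add y x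
    rw [abs_sub_nearestBit] at hround
    rw [abs_sub_comm] at hdist
    linarith
  calc (x - nearestBit y) ^ 2 = |x - nearestBit y| ^ 2 := (sq_abs _).symm
    _ ≤ (2 * |x - y| + dist01 x) ^ 2 := by gcongr
    _ ≤ 2 * ((2 * |x - y|) ^ 2 + dist01 x ^ 2) := add_sq_le
    _ = 8 * (x - y) ^ 2 + 2 * dist01 x ^ 2 := by rw [mul_pow, sq_abs]; ring

lemma sq_sub_le_of_nearestBit_eq {x y : ℝ} (h : nearestBit x = nearestBit y) :
    (x - y) ^ 2 ≤ 2 * (dist01 x ^ 2 + dist01 y ^ 2) := by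
  have habs : |x - y| ≤ dist01 x + dist01 y := by
    rw [← abs_sub_nearestBit x, ← abs_sub_nearestBit y, abs_sub_comm y, ← h]
    exact abs_sub_le _ _ _
  calc (x - y) ^ 2 = |x - y| ^ 2 := (sq_abs _).symm
    _ ≤ (dist01 x + dist01 y) ^ 2 := by gcongr
    _ ≤ 2 * (dist01 x ^ 2 + dist01 y ^ 2) := add_sq_le

-- By pigeonhole, two of the three points are rounded to the same bit.
lemma le_dist01_sq_of_le_sq_sub {x y z m : ℝ} (hxy : m ≤ (x - y) ^ 2) (hyz : m ≤ (y - z) ^ 2)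
    (hxz : m ≤ (x - z) ^ 2) :
    m ≤ 2 * (dist01 x ^ 2 + dist01 y ^ 2 + dist01 z ^ 2) := by
  have hpigeon : nearestBit x = nearestBit y ∨ nearestBit y = nearestBit z ∨
      nearestBit x = nearestBit z := by
    rcases nearestBit_eq_zero_or_one x with hx | hx <;>
    rcases nearestBit_eq_zero_or_one y with hy | hy <;>
    rcases nearestBit_eq_zero_or_one z with hz | hz <;> simp [hx, hy, hz]
  rcases hpigeon with h | h | h <;>
    linarith [sq_sub_le_of_nearestBit_eq h, sq_nonneg (dist01 x), sq_nonneg (dist01 y),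
      sq_nonneg (dist01 z)]

lemma min_sq_le_dist01_sq_parallelogram (p x y : ℝ) :
    2 * min (x ^ 2) (y ^ 2) ≤ dist01 (p + x + y) ^ 2 + dist01 (p + x - y) ^ 2 +
      dist01 (p - x + y) ^ 2 + dist01 (p - x - y) ^ 2 := by
  have hx := min_le_left (x ^ 2) (y ^ 2)
  have hy := min_le_right (x ^ 2) (y ^ 2)
  rcases le_total 0 (x * y) with hxy | hxy
  · have := le_dist01_sq_of_le_sq_sub (x := p + x + y) (y := p + x - y) (z := p - x - y)
      (m := 4 * min (x ^ 2) (y ^ 2)) (by nlinarith) (by nlinarith) (by nlinarith)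
    linarith [sq_nonneg (dist01 (p - x + y))]
  · have := le_dist01_sq_of_le_sq_sub (x := p + x - y) (y := p + x + y) (z := p - x + y)
      (m := 4 * min (x ^ 2) (y ^ 2)) (by nlinarith) (by nlinarith) (by nlinarith)
    linarith [sq_nonneg (dist01 (p - x - y))]

section Expectation

variable {Ω Ω' : Type*}

lemma half_le_expect_min {s : Finset Ω} {q : Ω → ℝ} (h₁ : 𝔼 ω ∈ s, q ω = 1)
    (h₂ : 𝔼 ω ∈ s, q ω ^ 2 ≤ 3) : 1 / 2 ≤ 𝔼 ω ∈ s, min (q ω) (3 / 2) := by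
  have hparabola : ∀ t : ℝ, t - t ^ 2 / 6 ≤ min t (3 / 2) := fun t =>
    le_min (by nlinarith [sq_nonneg t]) (by nlinarith [sq_nonneg (t - 3)])
  calc (1 / 2 : ℝ) ≤ 𝔼 ω ∈ s, (q ω - q ω ^ 2 / 6) := by
        rw [expect_sub_distrib, ← expect_div, h₁]; linarith
    _ ≤ 𝔼 ω ∈ s, min (q ω) (3 / 2) := expect_le_expect fun ω _ => hparabola (q ω)

lemma min_mul_min_mul_min_le {a b q r t : ℝ} (ha : 0 ≤ a) (hb : 0 ≤ b) (hq : 0 ≤ q)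
    (hr : 0 ≤ r) (ht : 0 ≤ t) :
    min a b * (min q t * min r t) ≤ t * min (a * q) (b * r) := by
  rw [mul_min_of_nonneg _ _ ht]
  apply le_min
  · calc min a b * (min q t * min r t) ≤ a * (q * t) := by
          gcongr
          exacts [min_le_left _ _, min_le_left _ _, min_le_right _ _]
      _ = t * (a * q) := by ring
  · calc min a b * (min q t * min r t) ≤ b * (t * r) := by
          gcongr
          exacts [min_le_right _ _, min_le_right _ _, min_le_left _ _]
      _ = t * (b * r) := by ring

lemma min_le_six_mul_expect_min {s : Finset Ω} {t : Finset Ω'} {X : Ω → ℝ} {Y : Ω' → ℝ} {a b : ℝ}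
    (hX : ∀ ω ∈ s, 0 ≤ X ω) (hY : ∀ ω ∈ t, 0 ≤ Y ω)
    (hX₁ : 𝔼 ω ∈ s, X ω = a) (hX₂ : 𝔼 ω ∈ s, X ω ^ 2 ≤ 3 * a ^ 2)
    (hY₁ : 𝔼 ω ∈ t, Y ω = b) (hY₂ : 𝔼 ω ∈ t, Y ω ^ 2 ≤ 3 * b ^ 2) :
    min a b ≤ 6 * 𝔼 ω ∈ s, 𝔼 ω' ∈ t, min (X ω) (Y ω') := by
  have hmean_nonneg : 0 ≤ 𝔼 ω ∈ s, 𝔼 ω' ∈ t, min (X ω) (Y ω') :=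
    expect_nonneg fun ω hω => expect_nonneg fun ω' hω' => le_min (hX ω hω) (hY ω' hω')
  rcases (hX₁ ▸ expect_nonneg hX : 0 ≤ a).eq_or_lt with ha | ha
  · exact (min_le_left _ _).trans (by linarith)
  rcases (hY₁ ▸ expect_nonneg hY : 0 ≤ b).eq_or_lt with hb | hb
  · exact (min_le_right _ _).trans (by linarith)
  have hmX : 1 / 2 ≤ 𝔼 ω ∈ s, min (X ω / a) (3 / 2) := by
    apply half_le_expect_min
    · rw [← expect_div, hX₁, div_self ha.ne']
    · simp only [div_pow]
      rwa [← expect_div, div_le_iff₀ (by positivity)]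
  have hmY : 1 / 2 ≤ 𝔼 ω ∈ t, min (Y ω / b) (3 / 2) := by
    apply half_le_expect_min
    · rw [← expect_div, hY₁, div_self hb.ne']
    · simp only [div_pow]
      rwa [← expect_div, div_le_iff₀ (by positivity)]
  have hpointwise : ∀ ω ∈ s, ∀ ω' ∈ t,
      min a b * (min (X ω / a) (3 / 2) * min (Y ω' / b) (3 / 2)) ≤
        3 / 2 * min (X ω) (Y ω') := fun ω hω ω' hω' => by
    simpa only [mul_div_cancel₀ _ ha.ne', mul_div_cancel₀ _ hb.ne'] using
      min_mul_min_mul_min_le ha.le hb.le (div_nonneg (hX ω hω) ha.le)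
        (div_nonneg (hY ω' hω') hb.le) (by norm_num : (0 : ℝ) ≤ 3 / 2)
  have hprod : min a b * ((𝔼 ω ∈ s, min (X ω / a) (3 / 2)) * 𝔼 ω ∈ t, min (Y ω / b) (3 / 2)) ≤
      3 / 2 * 𝔼 ω ∈ s, 𝔼 ω' ∈ t, min (X ω) (Y ω') := by
    rw [expect_mul_expect]
    simp only [mul_expect]
    exact expect_le_expect fun ω hω => expect_le_expect fun ω' hω' => hpointwise ω hω ω' hω'
  have hquarter := mul_le_mul hmX hmY (by norm_num) (by linarith)
  nlinarith [mul_le_mul_of_nonneg_left hquarter (lt_min ha hb).le]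

lemma mul_min_le_expect_min_of_mul_le_expect_mul {s : Finset Ω} {X Y : Ω → ℝ} {a b c : ℝ}
    (hX : ∀ ω ∈ s, 0 ≤ X ω) (hXa : ∀ ω ∈ s, X ω ≤ a) (hY : ∀ ω ∈ s, 0 ≤ Y ω)
    (hYb : ∀ ω ∈ s, Y ω ≤ b) (ha : 0 ≤ a) (hb : 0 ≤ b)
    (h : c * (a * b) ≤ 𝔼 ω ∈ s, X ω * Y ω) : c * min a b ≤ 𝔼 ω ∈ s, min (X ω) (Y ω) := by
  rcases (le_max_of_le_left ha : 0 ≤ max a b).eq_or_lt with h₀ | h₀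
  · have hmin : min a b = 0 := le_antisymm (h₀ ▸ min_le_max) (le_min ha hb)
    rw [hmin, mul_zero]
    exact expect_nonneg fun ω hω => le_min (hX ω hω) (hY ω hω)
  · refine le_of_mul_le_mul_left ?_ h₀
    calc max a b * (c * min a b) = c * (a * b) := by rw [← max_mul_min a b]; ring
      _ ≤ 𝔼 ω ∈ s, X ω * Y ω := h
      _ ≤ 𝔼 ω ∈ s, max a b * min (X ω) (Y ω) := expect_le_expect fun ω hω => by
          rw [← max_mul_min (X ω)]
          exact mul_le_mul_of_nonneg_right (max_le_max (hXa ω hω) (hYb ω hω))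
            (le_min (hX ω hω) (hY ω hω))
      _ = max a b * 𝔼 ω ∈ s, min (X ω) (Y ω) := (mul_expect _ _ _).symm

lemma expect_sq_sub_nearestBit_le (s : Finset Ω) (f h : Ω → ℝ) :
    𝔼 ω ∈ s, (f ω - nearestBit (h ω)) ^ 2 ≤
      8 * 𝔼 ω ∈ s, (f ω - h ω) ^ 2 + 2 * 𝔼 ω ∈ s, dist01 (f ω) ^ 2 := by
  rw [mul_expect, mul_expect, ← expect_add_distrib]
  exact expect_le_expect fun ω _ => sq_sub_nearestBit_le _ _

end Expectation

section Rademacher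

variable {ι ι' : Type*} [DecidableEq ι] [DecidableEq ι']

lemma expect_powerset_insert {x : ι} {P : Finset ι} (hx : x ∉ P) (f : Finset ι → ℝ) :
    𝔼 S ∈ (insert x P).powerset, f S = 𝔼 S ∈ P.powerset, (f S + f (insert x S)) / 2 := by
  simp only [expect_eq_sum_div_card, sum_powerset_insert hx, card_powerset,
    card_insert_of_notMem hx, ← sum_div, sum_add_distrib]
  push_cast
  rw [pow_succ]
  field_simp

lemma expect_powerset_sdiff (P : Finset ι) (f : Finset ι → ℝ) :
    𝔼 S ∈ P.powerset, f (P \ S) = 𝔼 S ∈ P.powerset, f S :=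
  expect_nbij' (P \ ·) (P \ ·) (by simp) (by simp)
    (fun S hS => Finset.sdiff_sdiff_eq_self (mem_powerset.mp hS))
    (fun S hS => Finset.sdiff_sdiff_eq_self (mem_powerset.mp hS)) (fun _ _ => rfl)

/-- The signed sum `∑ k ∈ P, ± d k` with sign `+` on `S` and `-` on `P \ S`; a uniformly random
`S ⊆ P` makes it a Rademacher sum. -/
def signedSum (d : ι → ℝ) (P S : Finset ι) : ℝ := ∑ k ∈ S, d k - ∑ k ∈ P \ S, d k

lemma signedSum_insert_left (d : ι → ℝ) {x : ι} {P S : Finset ι} (hx : x ∉ P) (hS : S ⊆ P) :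
    signedSum d (insert x P) S = signedSum d P S - d x := by
  rw [signedSum, signedSum, insert_sdiff_of_notMem _ fun h => hx (hS h),
    sum_insert fun h => hx (mem_sdiff.mp h).1]
  ring

lemma signedSum_insert_insert (d : ι → ℝ) {x : ι} {P S : Finset ι} (hx : x ∉ P) (hS : S ⊆ P) :
    signedSum d (insert x P) (insert x S) = signedSum d P S + d x := by
  rw [signedSum, signedSum, insert_sdiff_insert, sdiff_insert_of_notMem hx,
    sum_insert fun h => hx (hS h)]
  ring

lemma expect_signedSum_sq (d : ι → ℝ) (P : Finset ι) :
    𝔼 S ∈ P.powerset, signedSum d P S ^ 2 = ∑ k ∈ P, d k ^ 2 := by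
  induction P using Finset.induction_on with
  | empty => simp [signedSum]
  | insert x P hx ih =>
    calc 𝔼 S ∈ (insert x P).powerset, signedSum d (insert x P) S ^ 2
        = 𝔼 S ∈ P.powerset, (d x ^ 2 + signedSum d P S ^ 2) := by
          rw [expect_powerset_insert hx]
          refine expect_congr rfl fun S hS => ?_
          rw [signedSum_insert_left d hx (mem_powerset.mp hS),
            signedSum_insert_insert d hx (mem_powerset.mp hS)]
          ring
      _ = ∑ k ∈ insert x P, d k ^ 2 := by
          rw [expect_add_distrib, ih, expect_const P.powerset_nonempty, sum_insert hx]

lemma expect_signedSum_pow_four_le (d : ι → ℝ) (P : Finset ι) :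
    𝔼 S ∈ P.powerset, signedSum d P S ^ 4 ≤ 3 * (∑ k ∈ P, d k ^ 2) ^ 2 := by
  induction P using Finset.induction_on with
  | empty => simp [signedSum]
  | insert x P hx ih =>
    calc 𝔼 S ∈ (insert x P).powerset, signedSum d (insert x P) S ^ 4
        = 𝔼 S ∈ P.powerset,
            (signedSum d P S ^ 4 + 6 * d x ^ 2 * signedSum d P S ^ 2 + d x ^ 4) := by
          rw [expect_powerset_insert hx]
          refine expect_congr rfl fun S hS => ?_
          rw [signedSum_insert_left d hx (mem_powerset.mp hS),
            signedSum_insert_insert d hx (mem_powerset.mp hS)]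
          ring
      _ = 𝔼 S ∈ P.powerset, signedSum d P S ^ 4 + 6 * d x ^ 2 * ∑ k ∈ P, d k ^ 2 + d x ^ 4 := by
          rw [expect_add_distrib, expect_add_distrib, ← mul_expect, expect_signedSum_sq,
            expect_const P.powerset_nonempty]
      _ ≤ 3 * (∑ k ∈ P, d k ^ 2) ^ 2 + 6 * d x ^ 2 * ∑ k ∈ P, d k ^ 2 + 3 * d x ^ 4 := by
          gcongr
          nlinarith [sq_nonneg (d x ^ 2)]
      _ = 3 * (∑ k ∈ insert x P, d k ^ 2) ^ 2 := by rw [sum_insert hx]; ring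

lemma min_sum_sq_le_expect_min_signedSum_sq (d : ι → ℝ) (d' : ι' → ℝ) (P : Finset ι)
    (Q : Finset ι') :
    min (∑ k ∈ P, d k ^ 2) (∑ k ∈ Q, d' k ^ 2) ≤
      6 * 𝔼 S ∈ P.powerset, 𝔼 T ∈ Q.powerset, min (signedSum d P S ^ 2) (signedSum d' Q T ^ 2) :=
  min_le_six_mul_expect_min (fun _ _ => sq_nonneg _) (fun _ _ => sq_nonneg _)
    (expect_signedSum_sq d P) (by simpa only [← pow_mul] using expect_signedSum_pow_four_le d P)
    (expect_signedSum_sq d' Q) (by simpa only [← pow_mul] using expect_signedSum_pow_four_le d' Q)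

lemma min_signedSum_sq_le (p : ℝ) (d : ι → ℝ) (d' : ι' → ℝ) (P S : Finset ι) (Q T : Finset ι') :
    min (signedSum d P S ^ 2) (signedSum d' Q T ^ 2) ≤
      2 * (dist01 (p + ∑ k ∈ S, d k + ∑ k ∈ T, d' k) ^ 2 +
        dist01 (p + ∑ k ∈ S, d k + ∑ k ∈ Q \ T, d' k) ^ 2 +
        dist01 (p + ∑ k ∈ P \ S, d k + ∑ k ∈ T, d' k) ^ 2 +
        dist01 (p + ∑ k ∈ P \ S, d k + ∑ k ∈ Q \ T, d' k) ^ 2) := by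
  rw [signedSum, signedSum]
  -- The four points obtained by complementing `S` and `T` form a parallelogram.
  generalize ∑ k ∈ S, d k = x, ∑ k ∈ P \ S, d k = x', ∑ k ∈ T, d' k = y, ∑ k ∈ Q \ T, d' k = y'
  have h := min_sq_le_dist01_sq_parallelogram (p + (x + x') / 2 + (y + y') / 2)
    ((x - x') / 2) ((y - y') / 2)
  rw [show min ((x - x') ^ 2) ((y - y') ^ 2) =
      4 * min (((x - x') / 2) ^ 2) (((y - y') / 2) ^ 2) by
    rw [mul_min_of_nonneg _ _ (by norm_num)]; ring_nf]
  ring_nf at h ⊢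
  linarith

end Rademacher

lemma min_sum_sq_le_expect_dist01_sq {ι ι' : Type*} (p : ℝ) (d : ι → ℝ) (d' : ι' → ℝ)
    (P : Finset ι) (Q : Finset ι') :
    min (∑ k ∈ P, d k ^ 2) (∑ k ∈ Q, d' k ^ 2) ≤
      48 * 𝔼 S ∈ P.powerset, 𝔼 T ∈ Q.powerset,
        dist01 (p + ∑ k ∈ S, d k + ∑ k ∈ T, d' k) ^ 2 := by
  classical
  set g : Finset ι → Finset ι' → ℝ := fun S T => dist01 (p + ∑ k ∈ S, d k + ∑ k ∈ T, d' k) ^ 2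
  calc min (∑ k ∈ P, d k ^ 2) (∑ k ∈ Q, d' k ^ 2)
      ≤ 6 * 𝔼 S ∈ P.powerset, 𝔼 T ∈ Q.powerset,
          min (signedSum d P S ^ 2) (signedSum d' Q T ^ 2) :=
        min_sum_sq_le_expect_min_signedSum_sq d d' P Q
    _ ≤ 6 * 𝔼 S ∈ P.powerset, 𝔼 T ∈ Q.powerset,
          2 * (g S T + g S (Q \ T) + g (P \ S) T + g (P \ S) (Q \ T)) := by
        gcongr with S _ T
        exact min_signedSum_sq_le p d d' P S Q T
    _ = 48 * 𝔼 S ∈ P.powerset, 𝔼 T ∈ Q.powerset, g S T := by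
        simp only [← mul_expect, expect_add_distrib, expect_powerset_sdiff Q (g _),
          expect_powerset_sdiff P (fun S => 𝔼 T ∈ Q.powerset, g S T)]
        ring

section Pairing

variable {V α : Type*}

/-- A matching of the complete graph on `V`, encoded as a set of pairwise disjoint ordered pairs of
distinct points. -/
def IsPairing (M : Finset (V × V)) : Prop :=
  (∀ p ∈ M, p.1 ≠ p.2) ∧
    (M : Set (V × V)).Pairwise fun p q => p.1 ≠ q.1 ∧ p.1 ≠ q.2 ∧ p.2 ≠ q.1 ∧ p.2 ≠ q.2

lemma isPairing_empty : IsPairing (∅ : Finset (V × V)) := by simp [IsPairing]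

lemma isPairing_singleton {a b : V} (hab : a ≠ b) : IsPairing {(a, b)} := by
  simpa [IsPairing] using hab

lemma IsPairing.subset {M N : Finset (V × V)} (hN : IsPairing N) (hMN : M ⊆ N) : IsPairing M :=
  ⟨fun p hp => hN.1 p (hMN hp), hN.2.mono hMN⟩

lemma IsPairing.insert [DecidableEq V] {M : Finset (V × V)} (hM : IsPairing M)
    {a b : V} (hab : a ≠ b) (hdisj : ∀ p ∈ M, a ≠ p.1 ∧ a ≠ p.2 ∧ b ≠ p.1 ∧ b ≠ p.2) :
    IsPairing (insert (a, b) M) := by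
  refine ⟨forall_mem_insert _ _ _ |>.mpr ⟨hab, hM.1⟩, ?_⟩
  rw [coe_insert]
  refine hM.2.insert fun q hq _ => ⟨hdisj q hq, ?_⟩
  have := hdisj q hq
  tauto

/-- The change of `∑ x, v x (u x)` when `u` is composed with the transposition of `p.1` and
`p.2`. -/
def swapDiff (v : V → α → ℝ) (u : V → α) (p : V × V) : ℝ :=
  (v p.1 (u p.2) + v p.2 (u p.1)) - (v p.1 (u p.1) + v p.2 (u p.2))

lemma swapDiff_eq_sub (v : V → α → ℝ) (u : V → α) (p : V × V) :
    swapDiff v u p = (v p.1 - v p.2) (u p.2) - (v p.1 - v p.2) (u p.1) := by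
  simp only [swapDiff, Pi.sub_apply]
  ring

variable [Fintype V]

lemma sum_comp_swap [DecidableEq V] (v : V → α → ℝ) (u : V → α) {a b : V} (hab : a ≠ b) :
    ∑ x, v x (u (Equiv.swap a b x)) = ∑ x, v x (u x) + swapDiff v u (a, b) := by
  have hdiff : ∑ x, (v x (u (Equiv.swap a b x)) - v x (u x)) = swapDiff v u (a, b) := by
    rw [Fintype.sum_eq_add a b hab fun x hx => by
      rw [Equiv.swap_apply_of_ne_of_ne hx.1 hx.2, sub_self], Equiv.swap_apply_left,
      Equiv.swap_apply_right, swapDiff]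
    ring
  rw [← hdiff, sum_sub_distrib, add_sub_cancel]

lemma IsPairing.exists_perm_sum_comp_eq {S : Finset (V × V)} (hS : IsPairing S) :
    ∃ π : Equiv.Perm V, (∀ x, (∀ p ∈ S, x ≠ p.1 ∧ x ≠ p.2) → π x = x) ∧
      ∀ (v : V → α → ℝ) (u : V → α),
        ∑ x, v x (u (π x)) = ∑ x, v x (u x) + ∑ p ∈ S, swapDiff v u p := by
  classical
  induction S using Finset.induction_on with
  | empty => exact ⟨1, by simp⟩
  | insert p S hp ih =>
    obtain ⟨π, hfix, hsum⟩ := ih (hS.subset (subset_insert p S))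
    have hsep : ∀ q ∈ S, p.1 ≠ q.1 ∧ p.1 ≠ q.2 ∧ p.2 ≠ q.1 ∧ p.2 ≠ q.2 := fun q hq =>
      hS.2 (mem_insert_self p S) (mem_insert_of_mem hq) fun h => hp (h ▸ hq)
    have hπ₁ : π p.1 = p.1 := hfix _ fun q hq => ⟨(hsep q hq).1, (hsep q hq).2.1⟩
    have hπ₂ : π p.2 = p.2 := hfix _ fun q hq => (hsep q hq).2.2
    refine ⟨π * Equiv.swap p.1 p.2, fun x hx => ?_, fun v u => ?_⟩
    · have hxp := hx p (mem_insert_self p S)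
      rw [Equiv.Perm.mul_apply, Equiv.swap_apply_of_ne_of_ne hxp.1 hxp.2]
      exact hfix x fun q hq => hx q (mem_insert_of_mem hq)
    · have hswap := sum_comp_swap v (u ∘ π) (hS.1 p (mem_insert_self p S))
      simp only [Function.comp_apply, swapDiff, hπ₁, hπ₂] at hswap
      simp only [Equiv.Perm.mul_apply, hswap, hsum, sum_insert hp, swapDiff]
      ring

end Pairing

section Oscillation

variable {α : Type*} [Fintype α]

/-- The total squared oscillation of a function on a finite type; it vanishes exactly on the
constant functions. -/
def sqOscillation (w : α → ℝ) : ℝ := ∑ a, ∑ b, (w a - w b) ^ 2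

lemma sqOscillation_nonneg (w : α → ℝ) : 0 ≤ sqOscillation w :=
  sum_nonneg fun _ _ => sum_nonneg fun _ _ => sq_nonneg _

lemma sq_sub_le_sqOscillation (w : α → ℝ) (a b : α) :
    (w a - w b) ^ 2 ≤ sqOscillation w :=
  (single_le_sum (f := fun b => (w a - w b) ^ 2) (fun _ _ => sq_nonneg _) (mem_univ b)).trans
    (single_le_sum (f := fun a => ∑ b, (w a - w b) ^ 2)
      (fun _ _ => sum_nonneg fun _ _ => sq_nonneg _) (mem_univ a))

lemma sqOscillation_sub_self (w : α → ℝ) : sqOscillation (w - w) = 0 := by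
  simp [sqOscillation]

lemma sqOscillation_sub_comm (w w' : α → ℝ) :
    sqOscillation (w - w') = sqOscillation (w' - w) := by
  refine sum_congr rfl fun a _ => sum_congr rfl fun b _ => ?_
  simp only [Pi.sub_apply]
  ring

lemma sqOscillation_add_le (w w' : α → ℝ) :
    sqOscillation (w + w') ≤ 2 * sqOscillation w + 2 * sqOscillation w' := by
  simp only [sqOscillation, mul_sum, ← sum_add_distrib]
  refine sum_le_sum fun a _ => sum_le_sum fun b _ => ?_
  rw [Pi.add_apply, Pi.add_apply, add_sub_add_comm, ← mul_add]
  exact add_sq_le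

lemma swapDiff_sq_le_sqOscillation {V : Type*} (v : V → α → ℝ) (u : V → α) (p : V × V) :
    swapDiff v u p ^ 2 ≤ sqOscillation (v p.1 - v p.2) := by
  rw [swapDiff_eq_sub]
  exact sq_sub_le_sqOscillation _ _ _

/-- The function `w` shifted to have mean zero for the weights `κ`, that is, in a fixed coordinate
of a uniformly random point of the multislice. -/
def centered (κ : α → ℕ) (w : α → ℝ) (a : α) : ℝ :=
  w a - (∑ b, κ b * w b) / ∑ b, (κ b : ℝ)

lemma sum_mul_centered {κ : α → ℕ} (hκ : ∑ a, (κ a : ℝ) ≠ 0) (w : α → ℝ) :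
    ∑ a, κ a * centered κ w a = 0 := by
  simp only [centered, mul_sub, sum_sub_distrib, ← sum_mul]
  rw [mul_div_cancel₀ _ hκ, sub_self]

lemma centered_sq_le_sqOscillation {κ : α → ℕ}
    (hκ : ∑ a, (κ a : ℝ) ≠ 0) (w : α → ℝ) (a : α) : centered κ w a ^ 2 ≤ sqOscillation w := by
  set K : ℝ := ∑ b, (κ b : ℝ) with hK
  have hcentered : K * centered κ w a = ∑ b, κ b * (w a - w b) := by
    simp only [centered, mul_sub, sum_sub_distrib, ← sum_mul, ← hK]
    rw [mul_div_cancel₀ _ hκ]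
  have hK_sq : 0 < K ^ 2 := by positivity
  refine le_of_mul_le_mul_left ?_ hK_sq
  calc K ^ 2 * centered κ w a ^ 2 = (∑ b, κ b * (w a - w b)) ^ 2 := by
        rw [← mul_pow, hcentered]
    _ ≤ (∑ b, (κ b : ℝ)) * ∑ b, κ b * (w a - w b) ^ 2 :=
        sum_sq_le_sum_mul_sum_of_sq_le_mul _ (fun b _ => Nat.cast_nonneg _)
          (fun b _ => by positivity) fun b _ => by rw [mul_pow, sq, mul_assoc]
    _ ≤ (∑ b, (κ b : ℝ)) * ∑ b, κ b * sqOscillation w := by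
        gcongr
        exact sq_sub_le_sqOscillation w a _
    _ = K ^ 2 * sqOscillation w := by rw [← sum_mul, ← hK]; ring

end Oscillation

section Center

lemma sum_le_three_mul_of_min_sum_le {ι : Type*} [DecidableEq ι] {M : Finset ι} {f : ι → ℝ} {η : ℝ}
    (hf : ∀ i ∈ M, 0 ≤ f i) (hfη : ∀ i ∈ M, f i ≤ η)
    (hmin : ∀ P ⊆ M, min (∑ i ∈ P, f i) (∑ i ∈ M \ P, f i) ≤ η) : ∑ i ∈ M, f i ≤ 3 * η := by
  have hη : 0 ≤ η := le_trans (le_min (by simp) (sum_nonneg (by simpa using hf)))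
    (hmin ∅ (empty_subset M))
  by_contra! hM
  have hsmall : ∀ P ⊆ M, ∑ i ∈ P, f i ≤ η := fun P => by
    induction P using Finset.induction_on with
    | empty => simpa using hη
    | insert x P hx ih =>
      intro hP
      obtain ⟨hxM, hPM⟩ := insert_subset_iff.mp hP
      have hsum : ∑ i ∈ insert x P, f i ≤ 2 * η := by
        rw [sum_insert hx]
        linarith [ih hPM, hfη x hxM]
      have hcompl := sum_sdiff hP (f := f)
      exact (min_le_iff.mp (hmin _ hP)).resolve_right (by linarith)
  linarith [hsmall M subset_rfl]

variable {n : ℕ} {s : Fin n → Fin n → ℝ}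

/-- The pairs of points of `T` with sum `t` in `ℤ/n`, each oriented increasingly. As `t` varies
these pairings partition the edges of the complete graph on `T`, as the rounds of a round-robin
tournament do. -/
def pairsWithSum (T : Finset (Fin n)) (t : Fin n) : Finset (Fin n × Fin n) :=
  {p ∈ T ×ˢ T | p.1 < p.2 ∧ p.1 + p.2 = t}

lemma pairsWithSum_subset (T : Finset (Fin n)) (t : Fin n) : pairsWithSum T t ⊆ T ×ˢ T :=
  filter_subset _ _

lemma isPairing_pairsWithSum [NeZero n] (T : Finset (Fin n)) (t : Fin n) :
    IsPairing (pairsWithSum T t) := by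
  refine ⟨fun p hp => (mem_filter.mp hp).2.1.ne, fun p hp q hq hpq => ?_⟩
  obtain ⟨-, hp_lt, hp_sum⟩ := mem_filter.mp hp
  obtain ⟨-, hq_lt, hq_sum⟩ := mem_filter.mp hq
  have hsum : p.1 + p.2 = q.1 + q.2 := hp_sum.trans hq_sum.symm
  refine ⟨fun h => ?_, fun h => ?_, fun h => ?_, fun h => ?_⟩
  · exact hpq (Prod.ext h (add_left_cancel (h ▸ hsum)))
  · rw [h, add_comm q.1] at hsum
    exact (hp_lt.trans_eq (add_left_cancel hsum)).not_gt (h ▸ hq_lt)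
  · rw [h, add_comm p.1] at hsum
    exact (hp_lt.trans_eq h).not_gt ((add_left_cancel hsum).symm ▸ hq_lt)
  · exact hpq (Prod.ext (add_right_cancel (h ▸ hsum)) h)

lemma sum_sum_eq_two_mul_sum_pairsWithSum (hsymm : ∀ j k, s j k = s k j) (hself : ∀ j, s j j = 0)
    (T : Finset (Fin n)) :
    ∑ k ∈ T, ∑ j ∈ T, s j k = 2 * ∑ t, ∑ p ∈ pairsWithSum T t, s p.1 p.2 := by
  have hrounds : ∑ t, ∑ p ∈ pairsWithSum T t, s p.1 p.2 =
      ∑ j ∈ T, ∑ k ∈ T, if j < k then s j k else 0 := by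
    simp only [pairsWithSum, ← filter_filter]
    rw [sum_fiberwise, sum_filter, sum_product]
  have htrichotomy : ∀ j k, s j k = (if j < k then s j k else 0) + if k < j then s k j else 0 :=
    fun j k => by
      rcases lt_trichotomy j k with h | rfl | h
      · simp [h, h.not_gt]
      · simp [hself]
      · simp [h, h.not_gt, hsymm]
  rw [hrounds, sum_congr rfl fun k _ => sum_congr rfl fun j _ => htrichotomy j k]
  simp only [sum_add_distrib]
  rw [sum_comm, two_mul]

lemma exists_card_mul_sum_le_of_sum_pairing_le [NeZero n] (hsymm : ∀ j k, s j k = s k j)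
    (hself : ∀ j, s j j = 0) {T : Finset (Fin n)} (hT : T.Nonempty) {K : ℝ}
    (hK : ∀ M ⊆ T ×ˢ T, IsPairing M → ∑ p ∈ M, s p.1 p.2 ≤ K) :
    ∃ k ∈ T, #T * ∑ j ∈ T, s j k ≤ 2 * n * K := by
  refine exists_le_of_sum_le hT ?_
  rw [← mul_sum, sum_sum_eq_two_mul_sum_pairsWithSum hsymm hself, sum_const, nsmul_eq_mul]
  have hrounds : ∑ t, ∑ p ∈ pairsWithSum T t, s p.1 p.2 ≤ n * K := by
    simpa using sum_le_card_nsmul univ _ K fun t _ =>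
      hK _ (pairsWithSum_subset T t) (isPairing_pairsWithSum T t)
  calc #T * (2 * ∑ t, ∑ p ∈ pairsWithSum T t, s p.1 p.2) ≤ #T * (2 * (n * K)) := by gcongr
    _ = #T * (2 * n * K) := by ring

lemma exists_sum_le_of_forall_le [NeZero n] {η : ℝ} (hnonneg : ∀ j k, 0 ≤ s j k)
    (hsymm : ∀ j k, s j k = s k j) (hself : ∀ j, s j j = 0)
    (hmin : ∀ P Q : Finset (Fin n × Fin n), Disjoint P Q → IsPairing (P ∪ Q) →
      min (∑ p ∈ P, s p.1 p.2) (∑ p ∈ Q, s p.1 p.2) ≤ η) (hη : ∀ j k, s j k ≤ η) :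
    ∃ k, ∑ j, s j k ≤ 6 * η := by
  have hpairing : ∀ M ⊆ univ ×ˢ univ, IsPairing M → ∑ p ∈ M, s p.1 p.2 ≤ 3 * η :=
    fun M _ hM => sum_le_three_mul_of_min_sum_le (fun p _ => hnonneg p.1 p.2)
      (fun p _ => hη p.1 p.2) fun P hP =>
        hmin P (M \ P) disjoint_sdiff (by rwa [union_sdiff_of_subset hP])
  obtain ⟨k, -, hk⟩ := exists_card_mul_sum_le_of_sum_pairing_le hsymm hself univ_nonempty hpairing
  rw [card_univ, Fintype.card_fin, mul_comm 2 (n : ℝ), mul_assoc] at hk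
  have hn : (0 : ℝ) < n := by exact_mod_cast NeZero.pos n
  exact ⟨k, by linarith [le_of_mul_le_mul_left hk hn]⟩

-- A single pair of weight more than `η` forces every pairing that avoids it to be light.
lemma exists_sum_compl_pair_le_of_lt (hn : 4 ≤ n) {η : ℝ} (hsymm : ∀ j k, s j k = s k j)
    (hself : ∀ j, s j j = 0) {j₀ j₁ : Fin n} (hne : j₀ ≠ j₁)
    (hmin : ∀ P Q : Finset (Fin n × Fin n), Disjoint P Q → IsPairing (P ∪ Q) →
      min (∑ p ∈ P, s p.1 p.2) (∑ p ∈ Q, s p.1 p.2) ≤ η) (hη : η < s j₀ j₁) :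
    ∃ k ∈ ({j₀, j₁} : Finset (Fin n))ᶜ, ∑ j ∈ {j₀, j₁}ᶜ, s j k ≤ 4 * η := by
  have : NeZero n := ⟨by lia⟩
  have hcard : #({j₀, j₁} : Finset (Fin n))ᶜ = n - 2 := by
    rw [card_compl, Fintype.card_fin, card_pair hne]
  have hpairing : ∀ M ⊆ ({j₀, j₁} : Finset (Fin n))ᶜ ×ˢ {j₀, j₁}ᶜ, IsPairing M →
      ∑ p ∈ M, s p.1 p.2 ≤ η := fun M hMT hM => by
    have havoid : ∀ p ∈ M, j₀ ≠ p.1 ∧ j₀ ≠ p.2 ∧ j₁ ≠ p.1 ∧ j₁ ≠ p.2 := fun p hp => by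
      have := mem_product.mp (hMT hp)
      simp only [mem_compl, mem_insert, mem_singleton] at this
      tauto
    have hnotMem : (j₀, j₁) ∉ M := fun h => (havoid _ h).1 rfl
    refine (min_le_iff.mp (hmin {(j₀, j₁)} M (disjoint_singleton_left.mpr hnotMem)
      (hM.insert hne havoid))).resolve_left ?_
    rwa [sum_singleton, not_le]
  obtain ⟨k, hkT, hk⟩ := exists_card_mul_sum_le_of_sum_pairing_le hsymm hself
    (card_pos.mp (by lia)) hpairing
  refine ⟨k, hkT, ?_⟩
  have hη_nonneg : 0 ≤ η := by simpa using hpairing ∅ (empty_subset _) isPairing_empty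
  rw [hcard, Nat.cast_sub (by lia)] at hk
  have hn' : (4 : ℝ) ≤ n := by exact_mod_cast hn
  refine le_of_mul_le_mul_left (hk.trans ?_) (by push_cast; linarith : (0 : ℝ) < n - (2 : ℕ))
  push_cast
  nlinarith

lemma min_le_of_min_sum_pairing_le {η : ℝ}
    (hmin : ∀ P Q : Finset (Fin n × Fin n), Disjoint P Q → IsPairing (P ∪ Q) →
      min (∑ p ∈ P, s p.1 p.2) (∑ p ∈ Q, s p.1 p.2) ≤ η) {a b c d : Fin n} (hab : a ≠ b)
    (hcd : c ≠ d) (hsep : a ≠ c ∧ a ≠ d ∧ b ≠ c ∧ b ≠ d) : min (s a b) (s c d) ≤ η := by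
  simpa using hmin {(a, b)} {(c, d)} (by simp [hsep.1])
    ((isPairing_singleton hcd).insert hab (by simpa using hsep))

lemma exists_sum_erase_le_of_min_sum_pairing_le (hn : 4 ≤ n) {η : ℝ}
    (hnonneg : ∀ j k, 0 ≤ s j k) (hsymm : ∀ j k, s j k = s k j) (hself : ∀ j, s j j = 0)
    (htriangle : ∀ i j k, s i k ≤ 2 * s i j + 2 * s j k)
    (hmin : ∀ P Q : Finset (Fin n × Fin n), Disjoint P Q → IsPairing (P ∪ Q) →
      min (∑ p ∈ P, s p.1 p.2) (∑ p ∈ Q, s p.1 p.2) ≤ η) :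
    ∃ j₀ k, ∑ j ∈ univ.erase j₀, s j k ≤ 14 * η := by
  have : NeZero n := ⟨by lia⟩
  have hη_nonneg : 0 ≤ η := by simpa using hmin ∅ ∅ (disjoint_empty_left _) isPairing_empty
  by_cases! hall : ∀ j k, s j k ≤ η
  · obtain ⟨k, hk⟩ := exists_sum_le_of_forall_le hnonneg hsymm hself hmin hall
    refine ⟨0, k, (sum_le_univ_sum_of_nonneg fun j => hnonneg j k).trans ?_⟩
    linarith
  obtain ⟨j₀, j₁, hj⟩ := hall
  have hne : j₀ ≠ j₁ := by
    rintro rfl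
    linarith [hself j₀]
  obtain ⟨k, hkT, hk⟩ := exists_sum_compl_pair_le_of_lt hn hsymm hself hne hmin hj
  obtain ⟨k', hk'T, hk'⟩ : ∃ k' ∈ ({j₀, j₁} : Finset (Fin n))ᶜ, k' ≠ k := by
    refine exists_mem_ne ?_ k
    rw [card_compl, Fintype.card_fin, card_pair hne]
    lia
  have hle : s k' k ≤ 4 * η := (single_le_sum (fun j _ => hnonneg j k) hk'T).trans hk
  simp only [mem_compl, mem_insert, mem_singleton, not_or] at hkT hk'T
  have hcases : min (s j₀ k) (s j₁ k') ≤ η :=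
    min_le_of_min_sum_pairing_le hmin (Ne.symm hkT.1) (Ne.symm hk'T.2)
      ⟨hne, Ne.symm hk'T.1, hkT.2, hk'.symm⟩
  have herase : ∀ a b, a ≠ b → univ.erase a = insert b ({a, b} : Finset (Fin n))ᶜ := by
    intro a b hab
    ext x
    by_cases hx : x = b <;> simp [hx, hab.symm]
  rcases min_le_iff.mp hcases with h | h
  · refine ⟨j₁, k, ?_⟩
    rw [herase j₁ j₀ hne.symm, pair_comm, sum_insert (by simp)]
    linarith
  · refine ⟨j₀, k, ?_⟩
    rw [herase j₀ j₁ hne, sum_insert (by simp)]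
    linarith [htriangle j₁ k' k]

end Center

section Multislice

variable {ℓ n : ℕ} {κ : Fin ℓ → ℕ}

lemma mem_multislice {u : Fin n → Fin ℓ} :
    u ∈ multislice ℓ n κ ↔ ∀ i, #{j | u j = i} = κ i := by
  simp [multislice]

lemma msExp_eq_expect (f : (Fin n → Fin ℓ) → ℝ) :
    msExp ℓ n κ f = 𝔼 u ∈ multislice ℓ n κ, f u :=
  (expect_eq_sum_div_card _ _).symm

lemma comp_perm_mem_multislice {u : Fin n → Fin ℓ} (hu : u ∈ multislice ℓ n κ)
    (σ : Equiv.Perm (Fin n)) : u ∘ σ ∈ multislice ℓ n κ := by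
  rw [mem_multislice] at hu ⊢
  intro i
  rw [← hu i]
  exact card_equiv σ (by simp)

lemma expect_multislice_comp_perm (f : (Fin n → Fin ℓ) → ℝ) (σ : Equiv.Perm (Fin n)) :
    𝔼 u ∈ multislice ℓ n κ, f (u ∘ σ) = 𝔼 u ∈ multislice ℓ n κ, f u :=
  expect_nbij' (· ∘ σ) (· ∘ σ.symm) (fun _ hu => comp_perm_mem_multislice hu σ)
    (fun _ hu => comp_perm_mem_multislice hu σ.symm) (fun u _ => by ext; simp)
    (fun u _ => by ext; simp) (fun _ _ => rfl)

lemma multislice_nonempty (hκ : ∑ i, κ i = n) : (multislice ℓ n κ).Nonempty := by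
  subst hκ
  refine ⟨fun j => (finSigmaFinEquiv.symm j).1, mem_multislice.mpr fun i => ?_⟩
  simp only [card_filter, ← finSigmaFinEquiv.sum_comp, Equiv.symm_apply_apply, Fintype.sum_sigma]
  simp [apply_ite card]

lemma expect_dist01_add_swapDiff (c : ℝ) (v : Fin n → Fin ℓ → ℝ)
    {S : Finset (Fin n × Fin n)} (hS : IsPairing S) :
    𝔼 u ∈ multislice ℓ n κ, dist01 (c + ∑ x, v x (u x) + ∑ p ∈ S, swapDiff v u p) ^ 2 =
      𝔼 u ∈ multislice ℓ n κ, dist01 (c + ∑ x, v x (u x)) ^ 2 := by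
  obtain ⟨π, -, hπ⟩ := hS.exists_perm_sum_comp_eq (α := Fin ℓ)
  simp only [add_assoc, ← hπ]
  exact expect_multislice_comp_perm (fun u => dist01 (c + ∑ x, v x (u x)) ^ 2) π

lemma expect_min_sum_swapDiff_sq_le (c : ℝ) (v : Fin n → Fin ℓ → ℝ)
    {P Q : Finset (Fin n × Fin n)} (hPQ : Disjoint P Q) (hpair : IsPairing (P ∪ Q)) :
    𝔼 u ∈ multislice ℓ n κ, min (∑ p ∈ P, swapDiff v u p ^ 2) (∑ p ∈ Q, swapDiff v u p ^ 2) ≤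
      48 * 𝔼 u ∈ multislice ℓ n κ, dist01 (c + ∑ x, v x (u x)) ^ 2 := by
  calc 𝔼 u ∈ multislice ℓ n κ, min (∑ p ∈ P, swapDiff v u p ^ 2) (∑ p ∈ Q, swapDiff v u p ^ 2)
      ≤ 𝔼 u ∈ multislice ℓ n κ, 48 * 𝔼 S ∈ P.powerset, 𝔼 T ∈ Q.powerset, dist01
          (c + ∑ x, v x (u x) + ∑ p ∈ S, swapDiff v u p + ∑ p ∈ T, swapDiff v u p) ^ 2 :=
        expect_le_expect fun u _ => min_sum_sq_le_expect_dist01_sq _ _ _ P Q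
    _ = 48 * 𝔼 S ∈ P.powerset, 𝔼 T ∈ Q.powerset, 𝔼 u ∈ multislice ℓ n κ, dist01
          (c + ∑ x, v x (u x) + ∑ p ∈ S, swapDiff v u p + ∑ p ∈ T, swapDiff v u p) ^ 2 := by
        rw [← mul_expect, expect_comm]
        simp only [expect_comm (multislice ℓ n κ)]
    _ = 48 * 𝔼 S ∈ P.powerset, 𝔼 T ∈ Q.powerset,
          𝔼 u ∈ multislice ℓ n κ, dist01 (c + ∑ x, v x (u x)) ^ 2 := by
        congr 1
        refine expect_congr rfl fun S hS => expect_congr rfl fun T hT => ?_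
        rw [mem_powerset] at hS hT
        simp only [add_assoc (c + _), ← sum_union (hPQ.mono hS hT)]
        exact expect_dist01_add_swapDiff c v (hpair.subset (union_subset_union hS hT))
    _ = 48 * 𝔼 u ∈ multislice ℓ n κ, dist01 (c + ∑ x, v x (u x)) ^ 2 := by
        rw [expect_const P.powerset_nonempty, expect_const Q.powerset_nonempty]

lemma card_cylinder_mul_le (a : Fin n → Fin ℓ) {T : Finset (Fin n)} {y : Fin n} (hy : y ∉ T) :
    #{u ∈ multislice ℓ n κ | ∀ x ∈ T, u x = a x} * (κ (a y) - #T) ≤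
      n * #{u ∈ multislice ℓ n κ | ∀ x ∈ insert y T, u x = a x} := by
  refine (card_mul_le_card_mul (t := Tᶜ) (fun u j => u j = a y) (fun u hu => ?_)
    fun j hj => ?_).trans (Nat.mul_le_mul_right _ ((card_le_univ Tᶜ).trans_eq (Fintype.card_fin n)))
  · have hcount : #{j | u j = a y} = κ (a y) := mem_multislice.mp (mem_filter.mp hu).1 _
    rw [← hcount]
    refine (le_card_sdiff T _).trans (card_le_card fun j hj => ?_)
    simpa [bipartiteAbove, and_comm] using hj
  · have hfix : ∀ x ∈ T, Equiv.swap j y x = x := fun x hx =>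
      Equiv.swap_apply_of_ne_of_ne (fun h => mem_compl.mp hj (h ▸ hx)) fun h => hy (h ▸ hx)
    refine card_le_card_of_injOn (· ∘ Equiv.swap j y) (fun u hu => ?_)
      (Equiv.surjective _).injective_comp_right.injOn
    simp only [bipartiteBelow, mem_coe, mem_filter] at hu
    obtain ⟨⟨hu, huT⟩, huj⟩ := hu
    simp only [mem_coe, mem_filter, forall_mem_insert, Function.comp_apply,
      Equiv.swap_apply_right, huj, true_and]
    exact ⟨comp_perm_mem_multislice hu _, fun x hx => by rw [hfix x hx, huT x hx]⟩

lemma pow_mul_card_le_card_cylinder {ρ : ℝ} (hκ : ∀ i, ρ * n ≤ κ i) (a : Fin n → Fin ℓ)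
    (T : Finset (Fin n)) (hρ : 0 ≤ ρ) (hT : 2 * #T ≤ ρ * n) :
    (ρ / 2) ^ #T * #(multislice ℓ n κ) ≤ #{u ∈ multislice ℓ n κ | ∀ x ∈ T, u x = a x} := by
  induction T using Finset.induction_on with
  | empty => simp
  | insert y T hy ih =>
    rw [card_insert_of_notMem hy] at hT ⊢
    push_cast at hT
    have hn : (0 : ℝ) < n := by exact_mod_cast Fin.pos y
    have hcount : ρ / 2 * n ≤ (κ (a y) - #T : ℕ) := by
      have hsub : (κ (a y) : ℝ) ≤ (κ (a y) - #T : ℕ) + #T := by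
        exact_mod_cast (le_tsub_add : κ (a y) ≤ κ (a y) - #T + #T)
      linarith [hκ (a y)]
    have hstep : (#{u ∈ multislice ℓ n κ | ∀ x ∈ T, u x = a x} : ℝ) * (κ (a y) - #T : ℕ) ≤
        n * #{u ∈ multislice ℓ n κ | ∀ x ∈ insert y T, u x = a x} := by
      exact_mod_cast card_cylinder_mul_le a hy
    refine le_of_mul_le_mul_left (le_trans ?_ hstep) hn
    calc n * ((ρ / 2) ^ (#T + 1) * #(multislice ℓ n κ))
        = (ρ / 2) ^ #T * #(multislice ℓ n κ) * (ρ / 2 * n) := by ring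
      _ ≤ #{u ∈ multislice ℓ n κ | ∀ x ∈ T, u x = a x} * (κ (a y) - #T : ℕ) := by
          gcongr
          exact ih (by linarith)

lemma pow_mul_sum_le_expect_multislice {ι : Type*} [Fintype ι] [DecidableEq ι] {ρ : ℝ}
    (hκ : ∀ i, ρ * n ≤ κ i) (hρ : 0 ≤ ρ) (hM : (multislice ℓ n κ).Nonempty)
    (hι : 2 * Fintype.card ι ≤ ρ * n) (e : ι ↪ Fin n) {h : (ι → Fin ℓ) → ℝ} (hh : ∀ a, 0 ≤ h a) :
    (ρ / 2) ^ Fintype.card ι * ∑ a, h a ≤ 𝔼 u ∈ multislice ℓ n κ, h (u ∘ e) := by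
  have hM_pos : (0 : ℝ) < #(multislice ℓ n κ) := by exact_mod_cast hM.card_pos
  obtain ⟨u₀, -⟩ := hM
  have hfiber : ∀ a : ι → Fin ℓ, (ρ / 2) ^ Fintype.card ι * #(multislice ℓ n κ) ≤
      #{u ∈ multislice ℓ n κ | u ∘ e = a} := fun a => by
    have hcyl := pow_mul_card_le_card_cylinder hκ (Function.extend e a u₀) (univ.map e) hρ
      (by rwa [card_map])
    rw [card_map] at hcyl
    simpa [e.injective.extend_apply, funext_iff] using hcyl
  rw [expect_eq_sum_div_card, le_div_iff₀ hM_pos, ← sum_fiberwise _ (· ∘ e), mul_right_comm,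
    mul_sum]
  refine sum_le_sum fun a _ => ?_
  rw [sum_congr rfl fun u hu => by rw [(mem_filter.mp hu).2], sum_const, nsmul_eq_mul]
  exact mul_le_mul_of_nonneg_right (hfiber a) (hh a)

lemma sum_sumArrow_mul {α : Type*} [Fintype α] (h h' : α → α → ℝ) :
    ∑ a : Fin 2 ⊕ Fin 2 → α, h (a (.inl 0)) (a (.inl 1)) * h' (a (.inr 0)) (a (.inr 1)) =
      (∑ x, ∑ y, h x y) * ∑ x, ∑ y, h' x y := by
  rw [← (Equiv.sumArrowEquivProdArrow (Fin 2) (Fin 2) α).symm.sum_comp, Fintype.sum_prod_type,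
    ← (finTwoArrowEquiv α).symm.sum_comp]
  simp only [← (finTwoArrowEquiv α).symm.sum_comp, Fintype.sum_prod_type]
  simp [← sum_mul, ← mul_sum]

lemma pow_mul_sqOscillation_mul_le {ρ : ℝ} (hκ : ∀ i, ρ * n ≤ κ i) (hρ : 0 ≤ ρ)
    (hM : (multislice ℓ n κ).Nonempty) (hn : 8 ≤ ρ * n) (v : Fin n → Fin ℓ → ℝ)
    {p q : Fin n × Fin n} (hp : p.1 ≠ p.2) (hq : q.1 ≠ q.2)
    (hpq : p.1 ≠ q.1 ∧ p.1 ≠ q.2 ∧ p.2 ≠ q.1 ∧ p.2 ≠ q.2) :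
    (ρ / 2) ^ 4 * (sqOscillation (v p.1 - v p.2) * sqOscillation (v q.1 - v q.2)) ≤
      𝔼 u ∈ multislice ℓ n κ, swapDiff v u p ^ 2 * swapDiff v u q ^ 2 := by
  have he : Function.Injective (Sum.elim ![p.2, p.1] ![q.2, q.1]) := by
    refine Function.Injective.sumElim ?_ ?_ ?_
    · simpa [Fin.forall_fin_two, Function.Injective] using ⟨hp.symm, hp⟩
    · simpa [Fin.forall_fin_two, Function.Injective] using ⟨hq.symm, hq⟩
    · simp only [Fin.forall_fin_two, Matrix.cons_val_zero, Matrix.cons_val_one]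
      exact ⟨⟨hpq.2.2.2, hpq.2.2.1⟩, hpq.2.1, hpq.1⟩
  have hlower := pow_mul_sum_le_expect_multislice hκ hρ hM (ι := Fin 2 ⊕ Fin 2)
    (by norm_num; linarith) ⟨_, he⟩
    (h := fun a => ((v p.1 - v p.2) (a (.inl 0)) - (v p.1 - v p.2) (a (.inl 1))) ^ 2 *
      ((v q.1 - v q.2) (a (.inr 0)) - (v q.1 - v q.2) (a (.inr 1))) ^ 2)
    (fun a => by positivity)
  rw [sum_sumArrow_mul (fun x y => ((v p.1 - v p.2) x - (v p.1 - v p.2) y) ^ 2)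
    fun x y => ((v q.1 - v q.2) x - (v q.1 - v q.2) y) ^ 2] at hlower
  refine hlower.trans_eq (expect_congr rfl fun u _ => ?_)
  simp [swapDiff_eq_sub]

lemma mul_min_sum_sqOscillation_le {ρ : ℝ} (hκ : ∀ i, ρ * n ≤ κ i) (hρ : 0 ≤ ρ)
    (hM : (multislice ℓ n κ).Nonempty) (hn : 8 ≤ ρ * n) (c : ℝ) (v : Fin n → Fin ℓ → ℝ)
    {P Q : Finset (Fin n × Fin n)} (hPQ : Disjoint P Q) (hpair : IsPairing (P ∪ Q)) :
    (ρ / 2) ^ 4 *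
        min (∑ p ∈ P, sqOscillation (v p.1 - v p.2)) (∑ p ∈ Q, sqOscillation (v p.1 - v p.2)) ≤
      48 * 𝔼 u ∈ multislice ℓ n κ, dist01 (c + ∑ x, v x (u x)) ^ 2 := by
  refine le_trans ?_ (expect_min_sum_swapDiff_sq_le c v hPQ hpair)
  refine mul_min_le_expect_min_of_mul_le_expect_mul
    (fun _ _ => sum_nonneg fun _ _ => sq_nonneg _)
    (fun u _ => sum_le_sum fun p _ => swapDiff_sq_le_sqOscillation v u p)
    (fun _ _ => sum_nonneg fun _ _ => sq_nonneg _)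
    (fun u _ => sum_le_sum fun p _ => swapDiff_sq_le_sqOscillation v u p)
    (sum_nonneg fun _ _ => sqOscillation_nonneg _) (sum_nonneg fun _ _ => sqOscillation_nonneg _) ?_
  simp only [sum_mul_sum]
  simp only [mul_sum, expect_sum_comm]
  refine sum_le_sum fun p hp => sum_le_sum fun q hq => ?_
  have hp' := mem_union_left Q hp
  have hq' := mem_union_right P hq
  exact pow_mul_sqOscillation_mul_le hκ hρ hM hn v (hpair.1 p hp') (hpair.1 q hq')
    (hpair.2 hp' hq' fun h => disjoint_left.mp hPQ hp (h ▸ hq))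

lemma sum_comp_of_mem_multislice {u : Fin n → Fin ℓ} (hu : u ∈ multislice ℓ n κ)
    (g : Fin ℓ → ℝ) : ∑ x, g (u x) = ∑ a, κ a * g a := by
  rw [← sum_fiberwise univ u]
  refine sum_congr rfl fun a _ => ?_
  rw [sum_congr rfl fun x hx => by rw [(mem_filter.mp hx).2], sum_const, nsmul_eq_mul,
    mem_multislice.mp hu]

lemma expect_apply_eq_expect_apply (g : Fin ℓ → ℝ) (x y : Fin n) :
    𝔼 u ∈ multislice ℓ n κ, g (u x) = 𝔼 u ∈ multislice ℓ n κ, g (u y) := by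
  simpa using expect_multislice_comp_perm (κ := κ) (fun u => g (u y)) (Equiv.swap x y)

lemma sub_one_mul_expect_mul_apply {g : Fin ℓ → ℝ} (hg : ∑ a, κ a * g a = 0) (h : Fin ℓ → ℝ)
    {x y : Fin n} (hxy : x ≠ y) :
    (n - 1) * 𝔼 u ∈ multislice ℓ n κ, g (u x) * h (u y) =
      -𝔼 u ∈ multislice ℓ n κ, g (u y) * h (u y) := by
  have hexch : ∀ z ∈ univ.erase y, 𝔼 u ∈ multislice ℓ n κ, g (u z) * h (u y) =
      𝔼 u ∈ multislice ℓ n κ, g (u x) * h (u y) := fun z hz => by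
    simpa [Equiv.swap_apply_of_ne_of_ne hxy.symm (ne_of_mem_erase hz).symm] using
      expect_multislice_comp_perm (κ := κ) (fun u => g (u x) * h (u y)) (Equiv.swap x z)
  have hzero : ∑ z, 𝔼 u ∈ multislice ℓ n κ, g (u z) * h (u y) = 0 := by
    rw [← expect_sum_comm]
    refine expect_eq_zero fun u hu => ?_
    rw [← sum_mul, sum_comp_of_mem_multislice hu, hg, zero_mul]
  rw [← add_sum_erase _ _ (mem_univ y), sum_congr rfl hexch, sum_const,
    card_erase_of_mem (mem_univ y), card_univ, Fintype.card_fin, nsmul_eq_mul,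
    Nat.cast_pred (Fin.pos y)] at hzero
  exact eq_neg_of_add_eq_zero_right hzero

lemma sub_one_mul_expect_sum_sq_le {J : Finset (Fin n)} {w : Fin n → Fin ℓ → ℝ}
    (hw : ∀ x ∈ J, ∑ a, κ a * w x a = 0) :
    (n - 1) * 𝔼 u ∈ multislice ℓ n κ, (∑ x ∈ J, w x (u x)) ^ 2 ≤
      n * ∑ x ∈ J, 𝔼 u ∈ multislice ℓ n κ, w x (u x) ^ 2 := by
  rcases J.eq_empty_or_nonempty with rfl | ⟨o, -⟩
  · simp
  have hcov : ∀ x ∈ J, ∀ y ∈ J, (n - 1) * 𝔼 u ∈ multislice ℓ n κ, w x (u x) * w y (u y) =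
      (if x = y then n * 𝔼 u ∈ multislice ℓ n κ, w x (u x) ^ 2 else 0) -
        𝔼 u ∈ multislice ℓ n κ, w x (u o) * w y (u o) := fun x hx y _ => by
    rw [expect_apply_eq_expect_apply (fun a => w x a * w y a) o y]
    split_ifs with h
    · subst h
      simp only [sq]
      ring
    · rw [sub_one_mul_expect_mul_apply (hw x hx) (w y) h, zero_sub]
  have hexpand : ∀ z : (Fin n → Fin ℓ) → Fin n → Fin n,
      𝔼 u ∈ multislice ℓ n κ, (∑ x ∈ J, w x (u (z u x))) ^ 2 =
      ∑ x ∈ J, ∑ y ∈ J, 𝔼 u ∈ multislice ℓ n κ, w x (u (z u x)) * w y (u (z u y)) := fun z => by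
    simp only [sq, sum_mul_sum, expect_sum_comm]
  have hsq : 0 ≤ 𝔼 u ∈ multislice ℓ n κ, (∑ x ∈ J, w x (u o)) ^ 2 :=
    expect_nonneg fun _ _ => sq_nonneg _
  calc (n - 1) * 𝔼 u ∈ multislice ℓ n κ, (∑ x ∈ J, w x (u x)) ^ 2
      = n * ∑ x ∈ J, 𝔼 u ∈ multislice ℓ n κ, w x (u x) ^ 2 -
          𝔼 u ∈ multislice ℓ n κ, (∑ x ∈ J, w x (u o)) ^ 2 := by
        rw [hexpand fun _ x => x, hexpand fun _ _ => o]
        simp only [mul_sum]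
        rw [sum_congr rfl fun x hx => sum_congr rfl fun y hy => hcov x hx y hy]
        simp +contextual [sum_sub_distrib, sum_ite_eq]
    _ ≤ n * ∑ x ∈ J, 𝔼 u ∈ multislice ℓ n κ, w x (u x) ^ 2 := sub_le_self _ hsq

lemma exists_expect_sq_sub_apply_le (hn : 2 ≤ n) (hκ : ∑ i, κ i = n) (c : ℝ)
    (v : Fin n → Fin ℓ → ℝ) (j k : Fin n) :
    ∃ φ : Fin ℓ → ℝ, 𝔼 u ∈ multislice ℓ n κ, (c + ∑ x, v x (u x) - φ (u j)) ^ 2 ≤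
      2 * ∑ x ∈ univ.erase j, sqOscillation (v x - v k) := by
  have hκ_cast : ∑ a, (κ a : ℝ) = n := by exact_mod_cast hκ
  have hn_cast : (2 : ℝ) ≤ n := by exact_mod_cast hn
  have hκ_ne : ∑ a, (κ a : ℝ) ≠ 0 := by rw [hκ_cast]; positivity
  set w : Fin n → Fin ℓ → ℝ := fun x => centered κ (v x - v k) with hw
  have hvar := sub_one_mul_expect_sum_sq_le (J := univ.erase j) (w := w)
    fun x _ => sum_mul_centered hκ_ne (v x - v k)
  have hbound : ∀ x ∈ univ.erase j,
      𝔼 u ∈ multislice ℓ n κ, w x (u x) ^ 2 ≤ sqOscillation (v x - v k) := fun x _ =>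
    expect_le (multislice_nonempty hκ) fun u _ => centered_sq_le_sqOscillation hκ_ne _ _
  refine ⟨fun a => c + ∑ b, κ b * v k b + (v j - v k) a +
    ∑ x ∈ univ.erase j, (∑ b, κ b * (v x - v k) b) / ∑ b, (κ b : ℝ), ?_⟩
  have hexpand : ∀ u ∈ multislice ℓ n κ, (c + ∑ x, v x (u x) - (c + ∑ b, κ b * v k b +
      (v j - v k) (u j) + ∑ x ∈ univ.erase j, (∑ b, κ b * (v x - v k) b) / ∑ b, (κ b : ℝ))) ^ 2 =
      (∑ x ∈ univ.erase j, w x (u x)) ^ 2 := fun u hu => by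
    rw [← sum_comp_of_mem_multislice hu, ← add_sum_erase _ _ (mem_univ j),
      ← add_sum_erase _ (fun x => v k (u x)) (mem_univ j)]
    simp only [hw, centered, sum_sub_distrib, Pi.sub_apply]
    ring
  rw [expect_congr rfl hexpand]
  have hsum := sum_le_sum hbound
  have hnonneg : 0 ≤ ∑ x ∈ univ.erase j, 𝔼 u ∈ multislice ℓ n κ, w x (u x) ^ 2 :=
    sum_nonneg fun _ _ => expect_nonneg fun _ _ => sq_nonneg _
  nlinarith

lemma exists_eq_add_sum_of_degreeOne {f : (Fin n → Fin ℓ) → ℝ} (hf : degreeOne ℓ n κ f) :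
    ∃ (c : ℝ) (v : Fin n → Fin ℓ → ℝ), ∀ u ∈ multislice ℓ n κ, f u = c + ∑ x, v x (u x) := by
  obtain ⟨c, v, hv⟩ := hf
  exact ⟨c, v, fun u hu => by simp [hv u hu, xvar]⟩

lemma exists_expect_sq_sub_apply_le_mul_expect_dist01_sq {ρ : ℝ} (hρ : 0 < ρ)
    (hκρ : ∀ i, ρ * n ≤ κ i) (hκ : ∑ i, κ i = n) (hn₄ : 4 ≤ n) (hn : 8 ≤ ρ * n)
    {f : (Fin n → Fin ℓ) → ℝ} (hf : degreeOne ℓ n κ f) :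
    ∃ (j : Fin n) (φ : Fin ℓ → ℝ), 𝔼 u ∈ multislice ℓ n κ, (f u - φ (u j)) ^ 2 ≤
      1344 / (ρ / 2) ^ 4 * 𝔼 u ∈ multislice ℓ n κ, dist01 (f u) ^ 2 := by
  obtain ⟨c, v, hfv⟩ := exists_eq_add_sum_of_degreeOne hf
  set D := 𝔼 u ∈ multislice ℓ n κ, dist01 (f u) ^ 2
  have hD : 𝔼 u ∈ multislice ℓ n κ, dist01 (c + ∑ x, v x (u x)) ^ 2 = D :=
    expect_congr rfl fun u hu => by rw [hfv u hu]
  obtain ⟨j, k, hjk⟩ := exists_sum_erase_le_of_min_sum_pairing_le (η := 48 * D / (ρ / 2) ^ 4)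
    (s := fun j k => sqOscillation (v j - v k)) hn₄ (fun _ _ => sqOscillation_nonneg _)
    (fun _ _ => sqOscillation_sub_comm _ _) (fun _ => sqOscillation_sub_self _)
    (fun i j k => by
      simpa only [sub_add_sub_cancel] using sqOscillation_add_le (v i - v j) (v j - v k))
    (fun P Q hPQ hpair => by
      rw [le_div_iff₀' (by positivity), ← hD]
      exact mul_min_sum_sqOscillation_le hκρ hρ.le (multislice_nonempty hκ) hn c v hPQ hpair)
  obtain ⟨φ, hφ⟩ := exists_expect_sq_sub_apply_le (by lia) hκ c v j k
  refine ⟨j, φ, ?_⟩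
  calc 𝔼 u ∈ multislice ℓ n κ, (f u - φ (u j)) ^ 2
      = 𝔼 u ∈ multislice ℓ n κ, (c + ∑ x, v x (u x) - φ (u j)) ^ 2 :=
        expect_congr rfl fun u hu => by rw [hfv u hu]
    _ ≤ 2 * (14 * (48 * D / (ρ / 2) ^ 4)) := hφ.trans (by gcongr)
    _ = 1344 / (ρ / 2) ^ 4 * D := by ring

lemma dictator_comp_apply (j : Fin n) (φ : Fin ℓ → ℝ) : dictator ℓ n κ fun u => φ (u j) :=
  ⟨j, fun _ _ _ _ h => congrArg φ h⟩

end Multislice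

/-- **FKN theorem for the multislice (inductive form).**  If `f` is a degree-one function on a
`ρ`-balanced multislice with `E[dist(f,{0,1})²] = ε`, then `f` is `O(ε)`-close to a Boolean
dictator. -/
theorem fkn_multislice (ℓ : ℕ) (hℓ : 2 ≤ ℓ) (ρ : ℝ) (hρ : 0 < ρ) :
    ∃ (N : ℕ) (C : ℝ), ∀ n : ℕ, N ≤ n → ∀ κ : Fin ℓ → ℕ,
      (∀ i, 0 < κ i) → (∀ i, ρ * n ≤ (κ i : ℝ)) → (∑ i, κ i = n) →
      ∀ f : (Fin n → Fin ℓ) → ℝ, degreeOne ℓ n κ f →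
      ∀ ε : ℝ, msExp ℓ n κ (fun u => dist01 (f u) ^ 2) = ε →
      ∃ g : (Fin n → Fin ℓ) → ℝ, booleanOn ℓ n κ g ∧ dictator ℓ n κ g ∧
        msExp ℓ n κ (fun u => (f u - g u) ^ 2) ≤ C * ε := by
  refine ⟨max 4 ⌈8 / ρ⌉₊, 8 * (1344 / (ρ / 2) ^ 4) + 2, ?_⟩
  rintro n hn κ - hκρ hκ f hf ε rfl
  have hρn : 8 ≤ ρ * n := (div_le_iff₀' hρ).mp (Nat.ceil_le.mp (le_of_max_le_right hn))
  obtain ⟨j, φ, hφ⟩ := exists_expect_sq_sub_apply_le_mul_expect_dist01_sq hρ hκρ hκ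
    (le_of_max_le_left hn) hρn hf
  refine ⟨fun u => nearestBit (φ (u j)), fun u _ => nearestBit_eq_zero_or_one _,
    dictator_comp_apply j (nearestBit ∘ φ), ?_⟩
  simp only [msExp_eq_expect]
  linarith [expect_sq_sub_nearestBit_le (multislice ℓ n κ) f fun u => φ (u j)]
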